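/- There exists a twice continuously differentiable function y : [L, ∞) → ℝ satisfying y''(x) + 6·y(x)² - x = 0 for all x ≥ L such that, with y_0(x) = √(x/6)·[1 + (1/(8√6))·x^{-5/2} - (49/768)·x^{-5} + (1225/(1536√6))·x^{-15/2} + w_0(x)], one has |y(x) - y_0(x)| ≤ 0.00682·(15/2)·x^{-43/4} and |y'(x) - y_0'(x)| ≤ 0.126·x^{-21/2} for all x ≥ L; in particular y(x)·√(6/x) → 1 as x → ∞. -/

import Mathlib

/-!
Why the theorem holds. Let `yp` be the truncated expansion, the part of `y₀` without `w₀`, and put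
`S(x) = √(x/6) N₀(x)`. Then `yp'' + 6 yp² - x = -S` exactly (`yp_residual`), so `y = yp + h` solves
the equation iff
`h'' + (√24 x^{1/2} - (9/64) x^{-2}) h = S + F(x, h)`, where `F(x, h) = -6 h² - E(x) h`
and `E = 12 (yp - √(x/6)) + (9/64) x^{-2}` satisfies `|E| ≤ (25/64) x^{-2}`.

The left-hand side has the exact homogeneous solutions `x^{-1/8} e^{±iφ}`, `φ = b x^{5/4}`.
Hence variation of parameters from infinity gives an explicit right inverse `V` (`hasDerivAt_V`,
`hasDerivAt_V1`), and `|f| ≤ A t^{-23/2}` on `[L, ∞)` implies `|V f| ≤ 0.043 A x^{-43/4}` and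
`|(V f)'| ≤ 0.1 A x^{-21/2}` (`V_bound`, `V1_bound`). The function `w₀` is designed so that
`√(x/6) w₀ = V S` (`sqrt_mul_w₀r`), that is, `y₀ = yp + V S`.

Bounding the oscillatory integral `V S` by absolute values loses a factor `x^{5/4}`, which cannot be
afforded. Instead `S` is split as `gS + fS`, where `gS` is the image of `-cS x^{-19/2}` under the
differential operator and `fS = O(x^{-23/2})`; the primitive of the `gS` integrand is explicit
(`WS`), and `V S = -cS x^{-19/2} + V fS` (`V_S_eq`), so `|V S| ≤ 2.5 x^{-19/2}`.

Finally write `h = V S + x^{-43/4} g`. For `|g| ≤ 0.05115 = 0.00682 · (15/2)` one has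
`|F(x, h)| ≤ x^{-23/2}`, so `g ↦ x^{43/4} V(F(·, h))` maps this ball of bounded continuous functions
into itself, and it is a contraction (`exists_fixed`). At the fixed point `h = V S + V F`, so
`y - y₀ = V F` and `y' - y₀' = (V F)'`, and both error bounds are those for `V`.

Powers of `x` are handled by writing each of them as an integral power of `x^{1/8}` (`rpow_eighth`),
which turns the algebraic identities into identities of rational functions.
-/

open Set Complex MeasureTheory

noncomputable section

/-- `L = 11/2`. -/
def LP1 : ℝ := 11/2

/-- `b = (4/5)·24^{1/4}`. -/
def bP1 : ℝ := (4/5) * (24 : ℝ) ^ ((1 : ℝ)/4)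

/-- `a = (5/2)·b`. -/
def aP1 : ℝ := (5/2) * bP1

/-- `N₀(x) = -(4412401/(98304√6)) x^{-19/2} [1 - (1225/(90049√6)) x^{-5/2}
  + (30625/2161176) x^{-5}]`. -/
def N₀ (x : ℝ) : ℝ :=
  -(4412401 / (98304 * Real.sqrt 6)) * x ^ (-(19 : ℝ)/2) *
    (1 - (1225 / (90049 * Real.sqrt 6)) * x ^ (-(5 : ℝ)/2) +
      (30625 / 2161176) * x ^ (-(5 : ℝ)))

/-- `𝒢_j(x) = x^{-5/8} e^{(-1)^j i b x^{5/4}}`, so that `𝒢₁(x) = x^{-5/8} e^{-i b x^{5/4}}`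
and `𝒢₂(x) = x^{-5/8} e^{i b x^{5/4}}`. -/
def calG (j : ℕ) (x : ℝ) : ℂ :=
  ((x ^ (-(5 : ℝ)/8) : ℝ) : ℂ) *
    Complex.exp ((-1 : ℂ) ^ j * Complex.I * (bP1 : ℂ) * ((x ^ ((5 : ℝ)/4) : ℝ) : ℂ))

/-- `w₀(x) = Σ_{j=1}^{2} ((-1)^j/(i a)) 𝒢_j(x) ∫_∞^x 𝒢_{3-j}(t) t N₀(t) dt`
(the integral `∫_∞^x` being `-∫_x^∞`). -/
def w₀c (x : ℝ) : ℂ :=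
  ∑ j ∈ Finset.Icc 1 2,
    ((-1 : ℂ) ^ j / (Complex.I * (aP1 : ℂ))) * calG j x *
      (-(∫ t in Set.Ioi x, calG (3 - j) t * (t : ℂ) * ((N₀ t : ℝ) : ℂ)))

/-- The real-valued `w₀` (for real `x ≥ L`, `w₀(x)` is real). -/
def w₀r (x : ℝ) : ℝ := (w₀c x).re

/-- `y₀(x) = √(x/6)[1 + (1/(8√6)) x^{-5/2} - (49/768) x^{-5} + (1225/(1536√6)) x^{-15/2}
  + w₀(x)]`. -/
def y₀D1 (x : ℝ) : ℝ :=
  Real.sqrt (x / 6) *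
    (1 + (1 / (8 * Real.sqrt 6)) * x ^ (-(5 : ℝ)/2) - (49 / 768) * x ^ (-(5 : ℝ)) +
      (1225 / (1536 * Real.sqrt 6)) * x ^ (-(15 : ℝ)/2) + w₀r x)

/-! ### The right inverse of the linear operator -/

/-- `24^{1/4}`, the frequency scale: the phase `b x^{5/4}` has derivative `24^{1/4} x^{1/4}`. -/
def kk : ℝ := (24 : ℝ) ^ ((1 : ℝ) / 4)

/-- The phase `φ(x) = b x^{5/4}`. -/
def ph (x : ℝ) : ℝ := bP1 * x ^ ((5 : ℝ) / 4)

/-- The integrand `e^{iφ(t)} t^{-1/8} f(t)`. -/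
def ker (f : ℝ → ℝ) (t : ℝ) : ℂ :=
  Complex.exp (Complex.I * (ph t : ℂ)) * ((t ^ (-(1 : ℝ) / 8) * f t : ℝ) : ℂ)

/-- `e^{-iφ(x)} ∫_x^∞ e^{iφ(t)} t^{-1/8} f(t) dt`. Its imaginary part is the integral of
`sin(φ(t) - φ(x)) t^{-1/8} f(t)`, the variation-of-parameters kernel. -/
def osc (f : ℝ → ℝ) (x : ℝ) : ℂ :=
  Complex.exp (-(Complex.I * (ph x : ℂ))) * ∫ t in Ioi x, ker f t

/-- The solution, decaying at infinity, of
`u'' + (√24 x^{1/2} - (9/64) x^{-2}) u = f`. -/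
def V (f : ℝ → ℝ) (x : ℝ) : ℝ := kk⁻¹ * x ^ (-(1 : ℝ) / 8) * (osc f x).im

/-- The derivative of `V f`. -/
def V1 (f : ℝ → ℝ) (x : ℝ) : ℝ :=
  -(kk⁻¹ / 8) * x ^ (-(9 : ℝ) / 8) * (osc f x).im - x ^ ((1 : ℝ) / 8) * (osc f x).re

/-- Admissible right-hand sides: continuous on `(0, ∞)` and `O(t^{-9})` on `[L, ∞)`. -/
def Adm (f : ℝ → ℝ) : Prop :=
  ContinuousOn f (Ioi 0) ∧ ∃ A : ℝ, ∀ t, LP1 ≤ t → |f t| ≤ A * t ^ (-(9 : ℝ))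

lemma kk_pos : 0 < kk := by unfold kk; positivity

lemma kk_four : kk ^ 4 = 24 := by
  unfold kk
  rw [← Real.rpow_natCast, ← Real.rpow_mul (by norm_num)]
  norm_num

lemma kk_sq : kk ^ 2 = 2 * √6 := by
  have h6 : √6 ^ 2 = (6 : ℝ) := Real.sq_sqrt (by norm_num)
  have h : (kk ^ 2) ^ 2 = (2 * √6) ^ 2 := by
    rw [mul_pow, h6, ← pow_mul, kk_four]; norm_num
  exact (pow_left_inj₀ (by positivity) (by positivity) two_ne_zero).1 h

lemma LP1_pos : 0 < LP1 := by unfold LP1; norm_num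

/-- Rewrites `x ^ (k/8)` as an integral power of `x ^ (1/8)`. -/
lemma rpow_eighth {x : ℝ} (hx : 0 < x) (k : ℤ) {p : ℝ} (hp : p = k / 8) :
    x ^ p = (x ^ ((1 : ℝ) / 8)) ^ k := by
  rw [← Real.rpow_intCast, ← Real.rpow_mul hx.le, hp]
  congr 1; ring

lemma eighth_pow {x : ℝ} (hx : 0 < x) : (x ^ ((1 : ℝ) / 8)) ^ 8 = x := by
  rw [← Real.rpow_natCast, ← Real.rpow_mul hx.le]; norm_num

lemma hasDerivAt_ph {x : ℝ} (hx : 0 < x) : HasDerivAt ph (kk * x ^ ((1 : ℝ) / 4)) x := by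
  have h := (Real.hasDerivAt_rpow_const (p := (5 : ℝ) / 4) (Or.inl hx.ne')).const_mul bP1
  refine h.congr_deriv ?_
  rw [show (5 : ℝ) / 4 - 1 = 1 / 4 by norm_num]
  unfold bP1 kk
  ring

lemma contOn_rpow (p : ℝ) : ContinuousOn (fun t : ℝ => t ^ p) (Ioi 0) :=
  fun t ht => (Real.continuousAt_rpow_const t p (Or.inl (ne_of_gt ht))).continuousWithinAt

lemma contOn_ph : ContinuousOn ph (Ioi 0) := continuousOn_const.mul (contOn_rpow _)

lemma contOn_ker {f : ℝ → ℝ} (hf : ContinuousOn f (Ioi 0)) : ContinuousOn (ker f) (Ioi 0) := by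
  unfold ker
  refine ContinuousOn.mul ?_ ?_
  · refine Complex.continuous_exp.comp_continuousOn (continuousOn_const.mul ?_)
    exact Complex.continuous_ofReal.comp_continuousOn contOn_ph
  · exact Complex.continuous_ofReal.comp_continuousOn ((contOn_rpow _).mul hf)

lemma norm_ker (f : ℝ → ℝ) {t : ℝ} (ht : 0 < t) : ‖ker f t‖ = t ^ (-(1 : ℝ) / 8) * |f t| := by
  unfold ker
  rw [norm_mul, mul_comm Complex.I, Complex.norm_exp_ofReal_mul_I, one_mul, Complex.norm_real,
    Real.norm_eq_abs, abs_mul, abs_of_pos (Real.rpow_pos_of_pos ht _)]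

lemma intOn_ker {f : ℝ → ℝ} (hf : Adm f) {x : ℝ} (hx : 0 < x) :
    IntegrableOn (ker f) (Ioi x) := by
  obtain ⟨hc, A, hA⟩ := hf
  have h1 : IntegrableOn (ker f) (Ioi LP1) := by
    refine Integrable.mono'
      ((integrableOn_Ioi_rpow_of_lt (a := -(73 : ℝ) / 8) (by norm_num) LP1_pos).const_mul A)
      (((contOn_ker hc).mono (Ioi_subset_Ioi LP1_pos.le)).aestronglyMeasurable measurableSet_Ioi) ?_
    refine (ae_restrict_mem measurableSet_Ioi).mono fun t ht => ?_
    have ht0 : 0 < t := LP1_pos.trans ht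
    rw [norm_ker f ht0, show (-(73 : ℝ) / 8) = -(1 : ℝ) / 8 + -(9 : ℝ) by norm_num,
      Real.rpow_add ht0, mul_left_comm]
    exact mul_le_mul_of_nonneg_left (hA t (le_of_lt ht)) (Real.rpow_pos_of_pos ht0 _).le
  have h2 : IntegrableOn (ker f) (Icc x LP1) :=
    ((contOn_ker hc).mono fun t ht => hx.trans_le ht.1).integrableOn_compact isCompact_Icc
  refine (h2.union h1).mono_set fun t ht => ?_
  rcases le_or_gt t LP1 with h | h
  · exact Or.inl ⟨le_of_lt ht, h⟩
  · exact Or.inr h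

lemma hasDerivAt_osc {f : ℝ → ℝ} (hf : Adm f) {x : ℝ} (hx : 0 < x) :
    HasDerivAt (osc f) (-(Complex.I * ((kk * x ^ ((1 : ℝ) / 4) : ℝ) : ℂ)) * osc f x
      - ((x ^ (-(1 : ℝ) / 8) * f x : ℝ) : ℂ)) x := by
  have hI : HasDerivAt (fun z => ∫ t in Ioi z, ker f t) (-(ker f x)) x := by
    have hii : IntervalIntegrable (ker f) volume LP1 x :=
      ((contOn_ker hf.1).mono fun t ht => (lt_min LP1_pos hx).trans_le ht.1).intervalIntegrable
    have hd := intervalIntegral.integral_hasDerivAt_right hii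
      ((contOn_ker hf.1).stronglyMeasurableAtFilter isOpen_Ioi x hx)
      ((contOn_ker hf.1).continuousAt (Ioi_mem_nhds hx))
    -- Near `x`, also for `z < L`, the tail integral is the one from `L` minus that over `[L, z]`.
    refine (hd.const_sub (∫ t in Ioi LP1, ker f t)).congr_of_eventuallyEq ?_
    filter_upwards [Ioi_mem_nhds hx] with z hz
    rw [← intervalIntegral.integral_interval_add_Ioi (intOn_ker hf LP1_pos) (intOn_ker hf hz)]
    ring
  have hE : HasDerivAt (fun z : ℝ => Complex.exp (-(Complex.I * (ph z : ℂ))))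
      (Complex.exp (-(Complex.I * (ph x : ℂ))) *
        (-(Complex.I * ((kk * x ^ ((1 : ℝ) / 4) : ℝ) : ℂ)))) x :=
    (((hasDerivAt_ph hx).ofReal_comp.const_mul Complex.I).neg).cexp
  refine (hE.mul hI).congr_deriv ?_
  have he : Complex.exp (-(Complex.I * (ph x : ℂ))) * Complex.exp (Complex.I * (ph x : ℂ)) = 1 := by
    rw [← Complex.exp_add]; simp
  unfold osc
  simp only [ker]
  linear_combination -((x ^ (-(1 : ℝ) / 8) * f x : ℝ) : ℂ) * he

lemma hasDerivAt_osc_im {f : ℝ → ℝ} (hf : Adm f) {x : ℝ} (hx : 0 < x) :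
    HasDerivAt (fun z => (osc f z).im) (-(kk * x ^ ((1 : ℝ) / 4)) * (osc f x).re) x := by
  refine (Complex.imCLM.hasFDerivAt.comp_hasDerivAt x (hasDerivAt_osc hf hx)).congr_deriv ?_
  simp only [Complex.imCLM_apply, Complex.sub_im, Complex.mul_im, Complex.neg_re, Complex.neg_im,
    Complex.mul_re, Complex.I_re, Complex.I_im, Complex.ofReal_re, Complex.ofReal_im]
  ring

lemma hasDerivAt_osc_re {f : ℝ → ℝ} (hf : Adm f) {x : ℝ} (hx : 0 < x) :
    HasDerivAt (fun z => (osc f z).re)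
      (kk * x ^ ((1 : ℝ) / 4) * (osc f x).im - x ^ (-(1 : ℝ) / 8) * f x) x := by
  refine (Complex.reCLM.hasFDerivAt.comp_hasDerivAt x (hasDerivAt_osc hf hx)).congr_deriv ?_
  simp only [Complex.reCLM_apply, Complex.sub_re, Complex.mul_im, Complex.neg_re, Complex.neg_im,
    Complex.mul_re, Complex.I_re, Complex.I_im, Complex.ofReal_re, Complex.ofReal_im]
  ring

lemma hasDerivAt_rpow' {x : ℝ} (hx : 0 < x) (p : ℝ) :
    HasDerivAt (fun z : ℝ => z ^ p) (p * x ^ (p - 1)) x :=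
  Real.hasDerivAt_rpow_const (Or.inl hx.ne')

/-- The boundary terms from differentiating the integral cancel at first order. -/
lemma hasDerivAt_V {f : ℝ → ℝ} (hf : Adm f) {x : ℝ} (hx : 0 < x) :
    HasDerivAt (V f) (V1 f x) x := by
  refine (((hasDerivAt_rpow' hx (-(1 : ℝ) / 8)).const_mul kk⁻¹).mul
    (hasDerivAt_osc_im hf hx)).congr_deriv ?_
  have hk := kk_pos.ne'
  have hr : 0 < x ^ ((1 : ℝ) / 8) := Real.rpow_pos_of_pos hx _
  unfold V1
  rw [rpow_eighth hx (-1) (p := -(1 : ℝ) / 8) (by norm_num),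
    rpow_eighth hx (-9) (p := -(1 : ℝ) / 8 - 1) (by norm_num),
    rpow_eighth hx (-9) (p := -(9 : ℝ) / 8) (by norm_num),
    rpow_eighth hx 2 (p := (1 : ℝ) / 4) (by norm_num)]
  generalize x ^ ((1 : ℝ) / 8) = r at *
  have hr' := hr.ne'
  field_simp
  ring

/-- `V f` solves `u'' + (√24 x^{1/2} - (9/64) x^{-2}) u = f`, with `√24` written `2 √6`. -/
lemma hasDerivAt_V1 {f : ℝ → ℝ} (hf : Adm f) {x : ℝ} (hx : 0 < x) :
    HasDerivAt (V1 f)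
      (f x - (2 * √6 * x ^ ((1 : ℝ) / 2) - 9 / 64 * x ^ (-(2 : ℝ))) * V f x) x := by
  refine ((((hasDerivAt_rpow' hx (-(9 : ℝ) / 8)).const_mul (-(kk⁻¹ / 8))).mul
    (hasDerivAt_osc_im hf hx)).sub
    ((hasDerivAt_rpow' hx ((1 : ℝ) / 8)).mul (hasDerivAt_osc_re hf hx))).congr_deriv ?_
  have hk := kk_pos.ne'
  have hr : 0 < x ^ ((1 : ℝ) / 8) := Real.rpow_pos_of_pos hx _
  unfold V
  rw [← kk_sq, rpow_eighth hx (-1) (p := -(1 : ℝ) / 8) (by norm_num),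
    rpow_eighth hx (-17) (p := -(9 : ℝ) / 8 - 1) (by norm_num),
    rpow_eighth hx (-9) (p := -(9 : ℝ) / 8) (by norm_num),
    rpow_eighth hx (-7) (p := (1 : ℝ) / 8 - 1) (by norm_num),
    rpow_eighth hx (-16) (p := -(2 : ℝ)) (by norm_num),
    rpow_eighth hx 4 (p := (1 : ℝ) / 2) (by norm_num),
    rpow_eighth hx 2 (p := (1 : ℝ) / 4) (by norm_num)]
  generalize x ^ ((1 : ℝ) / 8) = r at *
  have hr' := hr.ne'
  field_simp
  ring

lemma Adm_of_bound {f : ℝ → ℝ} (hc : ContinuousOn f (Ioi 0)) {A : ℝ}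
    (hA : ∀ t, LP1 ≤ t → |f t| ≤ A * t ^ (-(23 : ℝ) / 2)) : Adm f := by
  refine ⟨hc, A, fun t ht => (hA t ht).trans ?_⟩
  have ht0 : 0 < t := LP1_pos.trans_le ht
  have hp : 0 < t ^ (-(23 : ℝ) / 2) := Real.rpow_pos_of_pos ht0 _
  have hA0 : 0 ≤ A := nonneg_of_mul_nonneg_left ((abs_nonneg _).trans (hA t ht)) hp
  refine mul_le_mul_of_nonneg_left (Real.rpow_le_rpow_of_exponent_le ?_ (by norm_num)) hA0
  unfold LP1 at ht; linarith

lemma norm_osc_le {f : ℝ → ℝ} {A : ℝ}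
    (hA : ∀ t, LP1 ≤ t → |f t| ≤ A * t ^ (-(23 : ℝ) / 2)) {x : ℝ} (hx : LP1 ≤ x) :
    ‖osc f x‖ ≤ A * (8 / 85) * x ^ (-(85 : ℝ) / 8) := by
  have hx0 : 0 < x := LP1_pos.trans_le hx
  have h1 : ‖∫ t in Ioi x, ker f t‖ ≤ ∫ t in Ioi x, A * t ^ (-(93 : ℝ) / 8) := by
    refine norm_integral_le_of_norm_le
      ((integrableOn_Ioi_rpow_of_lt (by norm_num) hx0).const_mul A) ?_
    refine (ae_restrict_mem measurableSet_Ioi).mono fun t ht => ?_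
    have ht0 : 0 < t := hx0.trans ht
    rw [norm_ker f ht0, show (-(93 : ℝ) / 8) = -(1 : ℝ) / 8 + -(23 : ℝ) / 2 by norm_num,
      Real.rpow_add ht0, mul_left_comm]
    exact mul_le_mul_of_nonneg_left (hA t (hx.trans (le_of_lt ht))) (Real.rpow_pos_of_pos ht0 _).le
  rw [integral_const_mul, integral_Ioi_rpow_of_lt (by norm_num) hx0] at h1
  unfold osc
  rw [norm_mul, show -(Complex.I * (ph x : ℂ)) = ((-ph x : ℝ) : ℂ) * Complex.I by push_cast; ring,
    Complex.norm_exp_ofReal_mul_I, one_mul]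
  refine h1.trans (le_of_eq ?_)
  rw [show (-(93 : ℝ) / 8 + 1) = -(85 : ℝ) / 8 by norm_num]
  ring

lemma kk_lb : 2.2133 ≤ kk := by
  by_contra h
  push Not at h
  have := pow_lt_pow_left₀ h kk_pos.le (n := 4) (by norm_num)
  rw [kk_four] at this
  norm_num at this

/-- On `[L, ∞)` the expansion parameter `x^{-5/4}` is at most `1/8`; true since `8⁴ ≤ (11/2)⁵`. -/
lemma pow_ge {x : ℝ} (hx : LP1 ≤ x) : 8 ≤ x ^ ((5 : ℝ) / 4) := by
  have hx0 : 0 < x := LP1_pos.trans_le hx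
  by_contra h
  push Not at h
  have h1 := pow_lt_pow_left₀ h (Real.rpow_pos_of_pos hx0 _).le (n := 4) (by norm_num)
  rw [← Real.rpow_natCast (x ^ ((5 : ℝ) / 4)), ← Real.rpow_mul hx0.le,
    show (5 : ℝ) / 4 * ((4 : ℕ) : ℝ) = ((5 : ℕ) : ℝ) by norm_num, Real.rpow_natCast] at h1
  have h2 := pow_le_pow_left₀ LP1_pos.le hx 5
  unfold LP1 at h2
  norm_num at h1 h2
  linarith

lemma V_bound {f : ℝ → ℝ} {A : ℝ}
    (hA : ∀ t, LP1 ≤ t → |f t| ≤ A * t ^ (-(23 : ℝ) / 2)) {x : ℝ} (hx : LP1 ≤ x) :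
    |V f x| ≤ A * 0.043 * x ^ (-(43 : ℝ) / 4) := by
  have hx0 : 0 < x := LP1_pos.trans_le hx
  have hA0 : 0 ≤ A := nonneg_of_mul_nonneg_left ((abs_nonneg _).trans (hA x hx))
    (Real.rpow_pos_of_pos hx0 _)
  have h := (Complex.abs_im_le_norm (osc f x)).trans (norm_osc_le hA hx)
  have hk : kk⁻¹ ≤ 2.2133⁻¹ := inv_anti₀ (by norm_num) kk_lb
  unfold V
  rw [abs_mul, abs_mul, abs_of_pos (inv_pos.2 kk_pos), abs_of_pos (Real.rpow_pos_of_pos hx0 _),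
    show -(43 : ℝ) / 4 = -(1 : ℝ) / 8 + -(85 : ℝ) / 8 by norm_num, Real.rpow_add hx0]
  have h1 := Real.rpow_pos_of_pos hx0 (-(1 : ℝ) / 8)
  have h2 := Real.rpow_pos_of_pos hx0 (-(85 : ℝ) / 8)
  calc kk⁻¹ * x ^ (-(1 : ℝ) / 8) * |(osc f x).im|
      ≤ 2.2133⁻¹ * x ^ (-(1 : ℝ) / 8) * (A * (8 / 85) * x ^ (-(85 : ℝ) / 8)) := by gcongr
    _ = (2.2133⁻¹ * (8 / 85)) * (A * (x ^ (-(1 : ℝ) / 8) * x ^ (-(85 : ℝ) / 8))) := by ring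
    _ ≤ 0.043 * (A * (x ^ (-(1 : ℝ) / 8) * x ^ (-(85 : ℝ) / 8))) := by
        refine mul_le_mul_of_nonneg_right (by norm_num) (by positivity)
    _ = _ := by ring

lemma V1_bound {f : ℝ → ℝ} {A : ℝ}
    (hA : ∀ t, LP1 ≤ t → |f t| ≤ A * t ^ (-(23 : ℝ) / 2)) {x : ℝ} (hx : LP1 ≤ x) :
    |V1 f x| ≤ A * 0.1 * x ^ (-(21 : ℝ) / 2) := by
  have hx0 : 0 < x := LP1_pos.trans_le hx
  have hA0 : 0 ≤ A := nonneg_of_mul_nonneg_left ((abs_nonneg _).trans (hA x hx))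
    (Real.rpow_pos_of_pos hx0 _)
  have hi := (Complex.abs_im_le_norm (osc f x)).trans (norm_osc_le hA hx)
  have hr := (Complex.abs_re_le_norm (osc f x)).trans (norm_osc_le hA hx)
  have hk : kk⁻¹ ≤ 2.2133⁻¹ := inv_anti₀ (by norm_num) kk_lb
  have hk0 := inv_pos.2 kk_pos
  have h1 := Real.rpow_pos_of_pos hx0 ((1 : ℝ) / 8)
  have h2 := Real.rpow_pos_of_pos hx0 (-(85 : ℝ) / 8)
  have h3 := Real.rpow_pos_of_pos hx0 (-(9 : ℝ) / 8)
  have h4 : x ^ (-(9 : ℝ) / 8) ≤ 8⁻¹ * x ^ ((1 : ℝ) / 8) := by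
    have e : x ^ (-(9 : ℝ) / 8) * x ^ ((5 : ℝ) / 4) = x ^ ((1 : ℝ) / 8) := by
      rw [← Real.rpow_add hx0]; norm_num
    have := mul_le_mul_of_nonneg_left (pow_ge hx) h3.le
    rw [e] at this
    linarith
  unfold V1
  rw [show -(21 : ℝ) / 2 = (1 : ℝ) / 8 + -(85 : ℝ) / 8 by norm_num, Real.rpow_add hx0]
  calc |-(kk⁻¹ / 8) * x ^ (-(9 : ℝ) / 8) * (osc f x).im - x ^ ((1 : ℝ) / 8) * (osc f x).re|
      ≤ kk⁻¹ / 8 * x ^ (-(9 : ℝ) / 8) * |(osc f x).im| + x ^ ((1 : ℝ) / 8) * |(osc f x).re| := by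
        refine (abs_sub _ _).trans (le_of_eq ?_)
        rw [abs_mul, abs_mul, abs_mul, abs_neg, abs_of_pos h1, abs_of_pos h3,
          abs_of_pos (div_pos hk0 (by norm_num))]
    _ ≤ 2.2133⁻¹ / 8 * (8⁻¹ * x ^ ((1 : ℝ) / 8)) * (A * (8 / 85) * x ^ (-(85 : ℝ) / 8))
        + x ^ ((1 : ℝ) / 8) * (A * (8 / 85) * x ^ (-(85 : ℝ) / 8)) := by gcongr
    _ = ((2.2133⁻¹ / 8 * 8⁻¹ + 1) * (8 / 85)) *
          (A * (x ^ ((1 : ℝ) / 8) * x ^ (-(85 : ℝ) / 8))) := by ring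
    _ ≤ 0.1 * (A * (x ^ ((1 : ℝ) / 8) * x ^ (-(85 : ℝ) / 8))) := by
        refine mul_le_mul_of_nonneg_right (by norm_num) (by positivity)
    _ = _ := by ring

/-! ### The leading correction -/

/-- The source term `√(x/6) N₀(x)`; its negative is the residual of the asymptotic expansion `yp`
in the equation `y'' + 6y² - x = 0`. -/
def S (x : ℝ) : ℝ := √(x / 6) * N₀ x

/-- Leading coefficient of `V S`: `V S x ~ -cS x^{-19/2}`. -/
def cS : ℝ := 4412401 / (1179648 * √6)

/-- The image of `-cS x^{-19/2}` under `u ↦ u'' + (√24 x^{1/2} - (9/64) x^{-2}) u`. -/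
def gS (x : ℝ) : ℝ :=
  -(cS * (2 * √6)) * x ^ (-(9 : ℝ)) - cS * (6375 / 64) * x ^ (-(23 : ℝ) / 2)

/-- What remains of `S` after removing `gS`; it is `O(x^{-23/2})`. -/
def fS (x : ℝ) : ℝ :=
  (4412401 / 589824 * (1225 / (90049 * √6)) + cS * (6375 / 64)) * x ^ (-(23 : ℝ) / 2)
    - 4412401 / 589824 * (30625 / 2161176) * x ^ (-(14 : ℝ))

lemma s6_pos : 0 < √(6 : ℝ) := by positivity

lemma s6_sq : √(6 : ℝ) ^ 2 = 6 := Real.sq_sqrt (by norm_num)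

lemma s6_lb : 2.4494 ≤ √(6 : ℝ) := Real.le_sqrt_of_sq_le (by norm_num)

lemma sqrt_div_six {x : ℝ} (hx : 0 < x) : √(x / 6) = (x ^ ((1 : ℝ) / 8)) ^ 4 / √6 := by
  rw [Real.sqrt_div hx.le, Real.sqrt_eq_rpow x, rpow_eighth hx 4 (by norm_num)]
  norm_cast

lemma S_eq {x : ℝ} (hx : 0 < x) : S x = fS x + gS x := by
  unfold S fS gS cS N₀
  have hr : 0 < x ^ ((1 : ℝ) / 8) := Real.rpow_pos_of_pos hx _
  rw [sqrt_div_six hx, rpow_eighth hx (-76) (p := -(19 : ℝ) / 2) (by norm_num),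
    rpow_eighth hx (-20) (p := -(5 : ℝ) / 2) (by norm_num),
    rpow_eighth hx (-40) (p := -(5 : ℝ)) (by norm_num),
    rpow_eighth hx (-72) (p := -(9 : ℝ)) (by norm_num),
    rpow_eighth hx (-92) (p := -(23 : ℝ) / 2) (by norm_num),
    rpow_eighth hx (-112) (p := -(14 : ℝ)) (by norm_num)]
  generalize x ^ ((1 : ℝ) / 8) = r at *
  have hr' := hr.ne'
  have h6 := s6_pos.ne'
  have hs := s6_sq
  generalize √(6 : ℝ) = s at *
  field_simp
  simp only [hs]
  ring

lemma contOn_fS : ContinuousOn fS (Ioi 0) :=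
  (continuousOn_const.mul (contOn_rpow _)).sub (continuousOn_const.mul (contOn_rpow _))

lemma contOn_gS : ContinuousOn gS (Ioi 0) :=
  (continuousOn_const.mul (contOn_rpow _)).sub (continuousOn_const.mul (contOn_rpow _))

lemma cS_pos : 0 < cS := by unfold cS; positivity

lemma cS_le : cS ≤ 1.5273 := by
  unfold cS
  rw [div_le_iff₀ (by positivity)]
  nlinarith [s6_lb]

lemma fS_bound (t : ℝ) (ht : LP1 ≤ t) : |fS t| ≤ 152.2 * t ^ (-(23 : ℝ) / 2) := by
  have ht0 : 0 < t := LP1_pos.trans_le ht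
  have h1 : 0 < t ^ (-(14 : ℝ)) := Real.rpow_pos_of_pos ht0 _
  have h2 : t ^ (-(14 : ℝ)) ≤ t ^ (-(23 : ℝ) / 2) := by
    refine Real.rpow_le_rpow_of_exponent_le ?_ (by norm_num)
    unfold LP1 at ht; linarith
  have h3 : (1225 / (90049 * √6) : ℝ) ≤ 0.00556 := by
    rw [div_le_iff₀ (by positivity)]
    nlinarith [s6_lb]
  have h4 : (0 : ℝ) < 1225 / (90049 * √6) := by positivity
  have h5 : (4412401 / 589824 * (1225 / (90049 * √6)) + cS * (6375 / 64)) ≤ (152.2 : ℝ) := by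
    nlinarith [cS_le]
  have h6 := cS_pos
  unfold fS
  generalize (1225 / (90049 * √6) : ℝ) = u at *
  have h7 : 0 ≤ (4412401 / 589824 * u + cS * (6375 / 64)) * t ^ (-(23 : ℝ) / 2) := by positivity
  rw [abs_le]
  constructor <;> nlinarith

lemma Adm_fS : Adm fS := Adm_of_bound contOn_fS fS_bound

lemma Adm_gS : Adm gS := by
  refine ⟨contOn_gS, cS * (2 * √6) + cS * (6375 / 64), fun t ht => ?_⟩
  have ht0 : 0 < t := LP1_pos.trans_le ht
  have h1 : 0 < t ^ (-(23 : ℝ) / 2) := Real.rpow_pos_of_pos ht0 _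
  have h2 : t ^ (-(23 : ℝ) / 2) ≤ t ^ (-(9 : ℝ)) := by
    refine Real.rpow_le_rpow_of_exponent_le ?_ (by norm_num)
    unfold LP1 at ht; linarith
  have h3 : 0 < cS * (2 * √6) := mul_pos cS_pos (by positivity)
  have h4 : 0 < cS * (6375 / 64) := mul_pos cS_pos (by norm_num)
  unfold gS
  rw [abs_le]
  constructor <;> nlinarith

lemma ker_add (f g : ℝ → ℝ) (t : ℝ) : ker (fun t => f t + g t) t = ker f t + ker g t := by
  unfold ker; push_cast; ring

lemma ker_sub (f g : ℝ → ℝ) (t : ℝ) : ker (fun t => f t - g t) t = ker f t - ker g t := by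
  unfold ker; push_cast; ring

lemma osc_sub {f g : ℝ → ℝ} (hf : Adm f) (hg : Adm g) {x : ℝ} (hx : 0 < x) :
    osc (fun t => f t - g t) x = osc f x - osc g x := by
  unfold osc
  simp only [ker_sub]
  rw [integral_sub (intOn_ker hf hx) (intOn_ker hg hx)]
  ring

lemma V_sub {f g : ℝ → ℝ} (hf : Adm f) (hg : Adm g) {x : ℝ} (hx : 0 < x) :
    V (fun t => f t - g t) x = V f x - V g x := by
  unfold V
  rw [osc_sub hf hg hx, Complex.sub_im]; ring

lemma Adm_S : Adm S := by
  obtain ⟨hc1, A, hA⟩ := Adm_fS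
  obtain ⟨hc2, B, hB⟩ := Adm_gS
  refine ⟨(hc1.add hc2).congr fun x hx => S_eq hx, A + B, fun t ht => ?_⟩
  rw [S_eq (LP1_pos.trans_le ht), add_mul]
  exact (abs_add_le _ _).trans (add_le_add (hA t ht) (hB t ht))

/-- The primitive of `ker gS`, namely `e^{iφ} cS ((75/8) t^{-85/8} + i 24^{1/4} t^{-75/8})`. It is
the Wronskian of `t^{-1/8} e^{iφ}` and `-cS t^{-19/2}`. -/
def WS (t : ℝ) : ℂ :=
  Complex.exp (Complex.I * (ph t : ℂ)) *
    (((cS * (75 / 8) * t ^ (-(85 : ℝ) / 8) : ℝ) : ℂ)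
      + Complex.I * ((cS * kk * t ^ (-(75 : ℝ) / 8) : ℝ) : ℂ))

lemma hasDerivAt_WS {x : ℝ} (hx : 0 < x) : HasDerivAt WS (ker gS x) x := by
  have hE : HasDerivAt (fun z : ℝ => Complex.exp (Complex.I * (ph z : ℂ)))
      (Complex.exp (Complex.I * (ph x : ℂ)) *
        (Complex.I * ((kk * x ^ ((1 : ℝ) / 4) : ℝ) : ℂ))) x :=
    ((hasDerivAt_ph hx).ofReal_comp.const_mul Complex.I).cexp
  refine (hE.mul (((hasDerivAt_rpow' hx (-(85 : ℝ) / 8)).const_mul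
    (cS * (75 / 8))).ofReal_comp.add
    (((hasDerivAt_rpow' hx (-(75 : ℝ) / 8)).const_mul
      (cS * kk)).ofReal_comp.const_mul Complex.I))).congr_deriv ?_
  unfold ker gS
  simp only [Pi.add_apply]
  have hr : 0 < x ^ ((1 : ℝ) / 8) := Real.rpow_pos_of_pos hx _
  rw [← kk_sq,
    rpow_eighth hx (-1) (p := -(1 : ℝ) / 8) (by norm_num),
    rpow_eighth hx (-93) (p := -(85 : ℝ) / 8 - 1) (by norm_num),
    rpow_eighth hx (-83) (p := -(75 : ℝ) / 8 - 1) (by norm_num),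
    rpow_eighth hx (-85) (p := -(85 : ℝ) / 8) (by norm_num),
    rpow_eighth hx (-75) (p := -(75 : ℝ) / 8) (by norm_num),
    rpow_eighth hx (-72) (p := -(9 : ℝ)) (by norm_num),
    rpow_eighth hx (-92) (p := -(23 : ℝ) / 2) (by norm_num),
    rpow_eighth hx 2 (p := (1 : ℝ) / 4) (by norm_num)]
  generalize x ^ ((1 : ℝ) / 8) = r at *
  have hr' : (r : ℂ) ≠ 0 := by exact_mod_cast hr.ne'
  push_cast
  generalize Complex.exp (Complex.I * (ph x : ℂ)) = e
  have hI := Complex.I_sq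
  field_simp
  linear_combination 4096 * e * cS * kk ^ 2 * r ^ 20 * hI

lemma tendsto_WS : Filter.Tendsto WS Filter.atTop (nhds 0) := by
  have h : ∀ p : ℝ, 0 < p → ∀ c : ℝ,
      Filter.Tendsto (fun t : ℝ => ((c * t ^ (-p) : ℝ) : ℂ)) Filter.atTop (nhds 0) := by
    intro p hp c
    have := ((tendsto_rpow_neg_atTop hp).const_mul c)
    rw [mul_zero] at this
    exact_mod_cast (Complex.continuous_ofReal.tendsto 0).comp this
  have h1 := (h (85 / 8) (by norm_num) (cS * (75 / 8))).add
    ((h (75 / 8) (by norm_num) (cS * kk)).const_mul Complex.I)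
  rw [mul_zero, add_zero] at h1
  have h2 := h1.norm
  rw [norm_zero] at h2
  refine squeeze_zero_norm (fun t => le_of_eq ?_) h2
  unfold WS
  rw [norm_mul, mul_comm Complex.I (ph t : ℂ), Complex.norm_exp_ofReal_mul_I, one_mul]
  norm_num [neg_div]

/-- One integration by parts extracts the leading behaviour of `V S`. -/
lemma V_S_eq {x : ℝ} (hx : 0 < x) : V S x = V fS x - cS * x ^ (-(19 : ℝ) / 2) := by
  have hg : ∫ t in Ioi x, ker gS t = 0 - WS x :=
    integral_Ioi_of_hasDerivAt_of_tendsto' (fun t ht => hasDerivAt_WS (hx.trans_le ht))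
      (intOn_ker Adm_gS hx) tendsto_WS
  have hS : ∫ t in Ioi x, ker S t = (∫ t in Ioi x, ker fS t) - WS x := by
    rw [sub_eq_add_neg, ← zero_sub, ← hg,
      ← integral_add (intOn_ker Adm_fS hx) (intOn_ker Adm_gS hx)]
    refine setIntegral_congr_fun measurableSet_Ioi fun t ht => ?_
    simp only [← ker_add]
    unfold ker
    rw [S_eq (hx.trans ht)]
  have ho : osc S x = osc fS x - (((cS * (75 / 8) * x ^ (-(85 : ℝ) / 8) : ℝ) : ℂ)
      + Complex.I * ((cS * kk * x ^ (-(75 : ℝ) / 8) : ℝ) : ℂ)) := by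
    have he : Complex.exp (-(Complex.I * (ph x : ℂ))) * Complex.exp (Complex.I * (ph x : ℂ)) = 1 := by
      rw [← Complex.exp_add]; simp
    unfold osc
    rw [hS]
    unfold WS
    linear_combination -(((cS * (75 / 8) * x ^ (-(85 : ℝ) / 8) : ℝ) : ℂ)
      + Complex.I * ((cS * kk * x ^ (-(75 : ℝ) / 8) : ℝ) : ℂ)) * he
  unfold V
  rw [ho]
  simp only [Complex.sub_im, Complex.add_im, Complex.mul_im, Complex.I_re, Complex.I_im,
    Complex.ofReal_re, Complex.ofReal_im]
  rw [show -(19 : ℝ) / 2 = -(1 : ℝ) / 8 + -(75 : ℝ) / 8 by norm_num, Real.rpow_add hx]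
  have hk := kk_pos.ne'
  field_simp
  ring

/-- `x^{-43/4}` is smaller than `x^{-19/2}` by the factor `x^{5/4} ≥ 8`. -/
lemma rpow_gain {x : ℝ} (hx : LP1 ≤ x) : x ^ (-(43 : ℝ) / 4) ≤ 8⁻¹ * x ^ (-(19 : ℝ) / 2) := by
  have hx0 : 0 < x := LP1_pos.trans_le hx
  have e : x ^ (-(43 : ℝ) / 4) * x ^ ((5 : ℝ) / 4) = x ^ (-(19 : ℝ) / 2) := by
    rw [← Real.rpow_add hx0]; norm_num
  have := mul_le_mul_of_nonneg_left (pow_ge hx) (Real.rpow_pos_of_pos hx0 (-(43 : ℝ) / 4)).le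
  rw [e] at this
  linarith

/-- The numerical margin: `cS ≤ 1.5273` and `152.2 · 0.043 / 8 < 0.82` add up to less than `2.5`. -/
lemma V_S_bound {x : ℝ} (hx : LP1 ≤ x) : |V S x| ≤ 2.5 * x ^ (-(19 : ℝ) / 2) := by
  have hx0 : 0 < x := LP1_pos.trans_le hx
  have hp := Real.rpow_pos_of_pos hx0 (-(19 : ℝ) / 2)
  have h1 := V_bound fS_bound hx
  have h2 := rpow_gain hx
  have h3 := cS_le
  rw [V_S_eq hx0]
  refine (abs_sub _ _).trans ?_
  rw [abs_mul, abs_of_pos cS_pos, abs_of_pos hp]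
  nlinarith

lemma calG_two {x : ℝ} : calG 2 x =
    ((x ^ (-(5 : ℝ) / 8) : ℝ) : ℂ) * Complex.exp (Complex.I * (ph x : ℂ)) := by
  unfold calG ph
  push_cast
  congr 2; ring

lemma calG_one {x : ℝ} : calG 1 x =
    ((x ^ (-(5 : ℝ) / 8) : ℝ) : ℂ) * Complex.exp (-(Complex.I * (ph x : ℂ))) := by
  unfold calG ph
  push_cast
  congr 2; ring

lemma conj_calG_two {x : ℝ} : (starRingEnd ℂ) (calG 2 x) = calG 1 x := by
  rw [calG_one, calG_two, map_mul, Complex.conj_ofReal, ← Complex.exp_conj]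
  simp

/-- The explicit `w₀` of the statement is `V S` up to the factor `√(x/6)`. -/
lemma sqrt_mul_w₀r {x : ℝ} (hx : 0 < x) : √(x / 6) * w₀r x = V S x := by
  have h2 : ∫ t in Ioi x, calG 2 t * (t : ℂ) * ((N₀ t : ℝ) : ℂ)
      = (√6 : ℝ) * ∫ t in Ioi x, ker S t := by
    rw [← integral_const_mul]
    refine setIntegral_congr_fun measurableSet_Ioi fun t ht => ?_
    have ht0 : 0 < t := hx.trans ht
    have e : t ^ (-(5 : ℝ) / 8) * t * N₀ t = √6 * (t ^ (-(1 : ℝ) / 8) * S t) := by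
      unfold S
      have h6 := s6_pos.ne'
      have hr : 0 < t ^ ((1 : ℝ) / 8) := Real.rpow_pos_of_pos ht0 _
      have h8 := eighth_pow ht0
      rw [sqrt_div_six ht0, rpow_eighth ht0 (-5) (p := -(5 : ℝ) / 8) (by norm_num),
        rpow_eighth ht0 (-1) (p := -(1 : ℝ) / 8) (by norm_num)]
      generalize t ^ ((1 : ℝ) / 8) = r at *
      have hr' := hr.ne'
      generalize N₀ t = n
      rw [← h8]
      field_simp
    simp only [calG_two, ker]
    have e' := congrArg (fun z : ℝ => (z : ℂ)) e
    push_cast at e' ⊢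
    linear_combination Complex.exp (Complex.I * (ph t : ℂ)) * e'
  have h1 : ∫ t in Ioi x, calG 1 t * (t : ℂ) * ((N₀ t : ℝ) : ℂ)
      = (starRingEnd ℂ) (∫ t in Ioi x, calG 2 t * (t : ℂ) * ((N₀ t : ℝ) : ℂ)) := by
    rw [← integral_conj]
    refine setIntegral_congr_fun measurableSet_Ioi fun t _ => ?_
    simp only [map_mul, conj_calG_two, Complex.conj_ofReal]
  have ha : aP1 = 2 * kk := by unfold aP1 bP1 kk; ring
  have hk := kk_pos.ne'
  set Z := osc S x with hZ
  have hw : w₀c x = ((√6 * kk⁻¹ * x ^ (-(5 : ℝ) / 8) * Z.im : ℝ) : ℂ) := by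
    have e1 : calG 1 x * ∫ t in Ioi x, calG 2 t * (t : ℂ) * ((N₀ t : ℝ) : ℂ)
        = ((√6 * x ^ (-(5 : ℝ) / 8) : ℝ) : ℂ) * Z := by
      rw [h2, calG_one, hZ]; unfold osc; push_cast; ring
    have e2 : calG 2 x * ∫ t in Ioi x, calG 1 t * (t : ℂ) * ((N₀ t : ℝ) : ℂ)
        = ((√6 * x ^ (-(5 : ℝ) / 8) : ℝ) : ℂ) * (starRingEnd ℂ) Z := by
      have := congrArg (starRingEnd ℂ) e1
      rw [map_mul, map_mul, Complex.conj_ofReal, ← h1, ← conj_calG_two, Complex.conj_conj] at this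
      exact this
    have hkc : (kk : ℂ) ≠ 0 := by exact_mod_cast hk
    have hs : w₀c x = (1 / (Complex.I * (aP1 : ℂ))) *
        (calG 1 x * (∫ t in Ioi x, calG 2 t * (t : ℂ) * ((N₀ t : ℝ) : ℂ))
          - calG 2 x * ∫ t in Ioi x, calG 1 t * (t : ℂ) * ((N₀ t : ℝ) : ℂ)) := by
      unfold w₀c
      rw [show Finset.Icc 1 2 = ({1, 2} : Finset ℕ) from rfl, Finset.sum_pair (by norm_num)]
      norm_num [div_eq_mul_inv, Complex.inv_I]
      ring
    rw [hs, e1, e2, ← mul_sub, Complex.sub_conj, ha]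
    have hI := Complex.I_ne_zero
    push_cast
    field_simp
  unfold w₀r V
  rw [hw, Complex.ofReal_re, hZ]
  have hr : 0 < x ^ ((1 : ℝ) / 8) := Real.rpow_pos_of_pos hx _
  rw [sqrt_div_six hx, rpow_eighth hx (-5) (p := -(5 : ℝ) / 8) (by norm_num),
    rpow_eighth hx (-1) (p := -(1 : ℝ) / 8) (by norm_num)]
  have h6 := s6_pos.ne'
  have hr' := hr.ne'
  field_simp

/-! ### The contraction -/

/-- The coefficient `12 (yp - √(t/6)) + (9/64) t^{-2}` of the linear perturbation. -/
def EE (t : ℝ) : ℝ :=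
  25 / 64 * t ^ (-(2 : ℝ)) - 49 * √6 / 384 * t ^ (-(9 : ℝ) / 2) + 1225 / 768 * t ^ (-(7 : ℝ))

/-- The perturbation `-6 h² - EE h` on the right-hand side of the equation for `h = y - yp`. -/
def FF (t h : ℝ) : ℝ := -6 * h ^ 2 - EE t * h

/-- The ansatz `h = V S + t^{-43/4} g`. -/
def hh (g : ℝ → ℝ) (t : ℝ) : ℝ := V S t + t ^ (-(43 : ℝ) / 4) * g t

lemma contOn_EE : ContinuousOn EE (Ioi 0) :=
  ((continuousOn_const.mul (contOn_rpow _)).sub (continuousOn_const.mul (contOn_rpow _))).add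
    (continuousOn_const.mul (contOn_rpow _))

lemma contOn_V {f : ℝ → ℝ} (hf : Adm f) : ContinuousOn (V f) (Ioi 0) :=
  fun _ hx => (hasDerivAt_V hf hx).continuousAt.continuousWithinAt

lemma contOn_FF {g : ℝ → ℝ} (hg : Continuous g) :
    ContinuousOn (fun t => FF t (hh g t)) (Ioi 0) := by
  have h : ContinuousOn (hh g) (Ioi 0) :=
    (contOn_V Adm_S).add ((contOn_rpow _).mul hg.continuousOn)
  exact (continuousOn_const.mul (h.pow 2)).sub (contOn_EE.mul h)

lemma inv_pow_le {x : ℝ} (hx : LP1 ≤ x) : x ^ (-(5 : ℝ) / 4) ≤ 8⁻¹ := by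
  have hx0 : 0 < x := LP1_pos.trans_le hx
  rw [neg_div, Real.rpow_neg hx0.le]
  exact inv_anti₀ (by norm_num) (pow_ge hx)

/-- Rewrites `x ^ (p + k (-5/4))` by means of the small parameter `x ^ (-5/4)`. -/
lemma rpow_split {x : ℝ} (hx : 0 < x) (k : ℕ) {p q : ℝ} (h : q = p + -(5 : ℝ) / 4 * k) :
    x ^ q = x ^ p * (x ^ (-(5 : ℝ) / 4)) ^ k := by
  rw [h, Real.rpow_add hx, Real.rpow_mul hx.le, Real.rpow_natCast]

lemma EE_bound {t : ℝ} (ht : LP1 ≤ t) : |EE t| ≤ 25 / 64 * t ^ (-(2 : ℝ)) := by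
  have ht0 : 0 < t := LP1_pos.trans_le ht
  have hu := inv_pow_le ht
  have hu0 := Real.rpow_pos_of_pos ht0 (-(5 : ℝ) / 4)
  have hp := Real.rpow_pos_of_pos ht0 (-(2 : ℝ))
  unfold EE
  rw [rpow_split ht0 2 (p := -(2 : ℝ)) (q := -(9 : ℝ) / 2) (by norm_num),
    rpow_split ht0 4 (p := -(2 : ℝ)) (q := -(7 : ℝ)) (by norm_num)]
  generalize t ^ (-(5 : ℝ) / 4) = u at *
  generalize t ^ (-(2 : ℝ)) = p at *
  have h6 : √(6 : ℝ) ≤ 3 := Real.sqrt_le_iff.2 ⟨by norm_num, by norm_num⟩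
  have h6' := s6_lb
  have hu2 : u ^ 2 ≤ 1 / 64 := by nlinarith
  have hu20 : 0 ≤ u ^ 2 := sq_nonneg u
  have e : 25 / 64 * p - 49 * √6 / 384 * (p * u ^ 2) + 1225 / 768 * (p * u ^ 4)
      = p * (25 / 64 - u ^ 2 * (49 * √6 / 384 - 1225 / 768 * u ^ 2)) := by ring
  rw [e, abs_mul, abs_of_pos hp, mul_comm]
  refine mul_le_mul_of_nonneg_right ?_ hp.le
  have h1 : 0 ≤ 49 * √6 / 384 - 1225 / 768 * u ^ 2 := by linarith
  have h2 : 49 * √6 / 384 - 1225 / 768 * u ^ 2 ≤ 1 := by linarith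
  have h3 := mul_nonneg hu20 h1
  have h4 := mul_le_mul_of_nonneg_left h2 hu20
  rw [abs_le]
  constructor <;> linarith

lemma FF_lip {t h k : ℝ} (ht : LP1 ≤ t) (hh : |h| ≤ 2.52 * t ^ (-(19 : ℝ) / 2))
    (hk : |k| ≤ 2.52 * t ^ (-(19 : ℝ) / 2)) :
    |FF t h - FF t k| ≤ 0.392 * t ^ (-(2 : ℝ)) * |h - k| := by
  have ht0 : 0 < t := LP1_pos.trans_le ht
  have hE := EE_bound ht
  have hu := inv_pow_le ht
  have hu0 := Real.rpow_pos_of_pos ht0 (-(5 : ℝ) / 4)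
  have hp := Real.rpow_pos_of_pos ht0 (-(2 : ℝ))
  have hs := abs_add_le h k
  rw [rpow_split ht0 6 (p := -(2 : ℝ)) (q := -(19 : ℝ) / 2) (by norm_num)] at hh hk
  have hu6 := pow_le_pow_left₀ hu0.le hu 6
  have hpu := mul_le_mul_of_nonneg_left
    (hu6.trans (by norm_num : (8⁻¹ : ℝ) ^ 6 ≤ 0.000004)) hp.le
  have e : FF t h - FF t k = -((6 * (h + k) + EE t) * (h - k)) := by unfold FF; ring
  rw [e, abs_neg, abs_mul]
  refine mul_le_mul_of_nonneg_right ?_ (abs_nonneg _)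
  have h1 := abs_add_le (6 * (h + k)) (EE t)
  rw [abs_mul, abs_of_pos (by norm_num : (0 : ℝ) < 6)] at h1
  linarith

lemma hh_bound {g : ℝ → ℝ} {t : ℝ} (ht : LP1 ≤ t) (hg : |g t| ≤ 0.05115) :
    |hh g t| ≤ 2.52 * t ^ (-(19 : ℝ) / 2) := by
  have ht0 : 0 < t := LP1_pos.trans_le ht
  have h1 := V_S_bound ht
  have h2 := rpow_gain ht
  have hp := Real.rpow_pos_of_pos ht0 (-(19 : ℝ) / 2)
  have hq := Real.rpow_pos_of_pos ht0 (-(43 : ℝ) / 4)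
  unfold hh
  refine (abs_add_le _ _).trans ?_
  rw [abs_mul, abs_of_pos hq]
  nlinarith [mul_le_mul_of_nonneg_left hg hq.le]

lemma FF_bound {g : ℝ → ℝ} (hg : ∀ t, |g t| ≤ 0.05115) (t : ℝ) (ht : LP1 ≤ t) :
    |FF t (hh g t)| ≤ 1 * t ^ (-(23 : ℝ) / 2) := by
  have ht0 : 0 < t := LP1_pos.trans_le ht
  have hp := Real.rpow_pos_of_pos ht0 (-(2 : ℝ))
  have hq := Real.rpow_pos_of_pos ht0 (-(19 : ℝ) / 2)
  have h1 := hh_bound ht (hg t)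
  have h2 := FF_lip (k := 0) ht h1 (by rw [abs_zero]; positivity)
  have h0 : FF t 0 = 0 := by unfold FF; ring
  rw [h0, sub_zero, sub_zero] at h2
  rw [show -(23 : ℝ) / 2 = -(2 : ℝ) + -(19 : ℝ) / 2 by norm_num, Real.rpow_add ht0]
  nlinarith [mul_le_mul_of_nonneg_left h1 hp.le, mul_pos hp hq]

/-- Lipschitz dependence of `F(t, h)` on `g`; the factor `t^{-2} t^{-43/4}` gained here is even
smaller than the `t^{-23/2}` that is needed. -/
lemma FF_diff {g k : ℝ → ℝ} (hg : ∀ t, |g t| ≤ 0.05115) (hk : ∀ t, |k t| ≤ 0.05115) {d : ℝ}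
    (hd : ∀ t, |g t - k t| ≤ d) (t : ℝ) (ht : LP1 ≤ t) :
    |FF t (hh g t) - FF t (hh k t)| ≤ d * t ^ (-(23 : ℝ) / 2) := by
  have ht0 : 0 < t := LP1_pos.trans_le ht
  have hp := Real.rpow_pos_of_pos ht0 (-(2 : ℝ))
  have hq := Real.rpow_pos_of_pos ht0 (-(19 : ℝ) / 2)
  have hr := Real.rpow_pos_of_pos ht0 (-(43 : ℝ) / 4)
  have hd0 : 0 ≤ d := (abs_nonneg _).trans (hd t)
  have h2 := FF_lip ht (hh_bound ht (hg t)) (hh_bound ht (hk t))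
  have e : hh g t - hh k t = t ^ (-(43 : ℝ) / 4) * (g t - k t) := by unfold hh; ring
  rw [e, abs_mul, abs_of_pos hr] at h2
  rw [show -(23 : ℝ) / 2 = -(2 : ℝ) + -(19 : ℝ) / 2 by norm_num, Real.rpow_add ht0]
  calc _ ≤ _ := h2
    _ ≤ 0.392 * t ^ (-(2 : ℝ)) * ((8⁻¹ * t ^ (-(19 : ℝ) / 2)) * d) := by
        gcongr
        · exact rpow_gain ht
        · exact hd t
    _ = (0.392 * 8⁻¹) * (d * (t ^ (-(2 : ℝ)) * t ^ (-(19 : ℝ) / 2))) := by ring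
    _ ≤ 1 * (d * (t ^ (-(2 : ℝ)) * t ^ (-(19 : ℝ) / 2))) := by
        refine mul_le_mul_of_nonneg_right (by norm_num) (by positivity)
    _ = _ := one_mul _

lemma Adm_FF {g : ℝ → ℝ} (hc : Continuous g) (hg : ∀ t, |g t| ≤ 0.05115) :
    Adm (fun t => FF t (hh g t)) := Adm_of_bound (contOn_FF hc) (FF_bound hg)

/-- The fixed-point map on `g`, with the argument clamped to `[L, ∞)`. -/
def TT (g : ℝ → ℝ) (x : ℝ) : ℝ :=
  (max LP1 x) ^ ((43 : ℝ) / 4) * V (fun t => FF t (hh g t)) (max LP1 x)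

lemma clamp_mul {A B v x : ℝ} (hx : LP1 ≤ x) (h : |v| ≤ A * B * x ^ (-(43 : ℝ) / 4)) :
    |x ^ ((43 : ℝ) / 4) * v| ≤ A * B := by
  have hx0 : 0 < x := LP1_pos.trans_le hx
  have hp := Real.rpow_pos_of_pos hx0 ((43 : ℝ) / 4)
  rw [abs_mul, abs_of_pos hp]
  refine (mul_le_mul_of_nonneg_left h hp.le).trans (le_of_eq ?_)
  have e : x ^ ((43 : ℝ) / 4) * x ^ (-(43 : ℝ) / 4) = 1 := by
    rw [← Real.rpow_add hx0]; norm_num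
  linear_combination A * B * e

lemma TT_bound {g : ℝ → ℝ} (hg : ∀ t, |g t| ≤ 0.05115) (x : ℝ) : |TT g x| ≤ 0.05115 :=
  (clamp_mul (le_max_left _ _) (V_bound (FF_bound hg) (le_max_left _ _))).trans (by norm_num)

lemma TT_cont {g : ℝ → ℝ} (hc : Continuous g) (hg : ∀ t, |g t| ≤ 0.05115) :
    Continuous (TT g) := by
  have hm : Continuous fun x : ℝ => max LP1 x := continuous_const.max continuous_id
  exact ((contOn_rpow _).mul (contOn_V (Adm_FF hc hg))).comp_continuous hm
    fun x => LP1_pos.trans_le (le_max_left _ _)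

lemma TT_contr {g k : ℝ → ℝ} (hgc : Continuous g) (hkc : Continuous k)
    (hg : ∀ t, |g t| ≤ 0.05115) (hk : ∀ t, |k t| ≤ 0.05115) {d : ℝ}
    (hd : ∀ t, |g t - k t| ≤ d) (x : ℝ) : |TT g x - TT k x| ≤ d * 0.043 := by
  have hm : LP1 ≤ max LP1 x := le_max_left _ _
  have h := clamp_mul hm (V_bound (FF_diff hg hk hd) hm)
  rw [V_sub (Adm_FF hgc hg) (Adm_FF hkc hk) (LP1_pos.trans_le hm), mul_sub] at h
  exact h

/-- Banach's fixed point theorem in the closed ball of radius `0.05115` of the bounded continuous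
functions. -/
lemma exists_fixed : ∃ g : ℝ → ℝ, Continuous g ∧ (∀ x, |g x| ≤ 0.05115) ∧ TT g = g := by
  let B : Set (BoundedContinuousFunction ℝ ℝ) := Metric.closedBall 0 0.05115
  have hB : ∀ g ∈ B, ∀ x, |g x| ≤ 0.05115 := fun g hg x =>
    (g.norm_coe_le_norm x).trans (by simpa [B] using hg)
  let T : B → B := fun g => ⟨BoundedContinuousFunction.ofNormedAddCommGroup (TT g.1)
    (TT_cont g.1.continuous (hB _ g.2)) 0.05115 (TT_bound (hB _ g.2)), by
      rw [mem_closedBall_zero_iff]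
      exact BoundedContinuousFunction.norm_ofNormedAddCommGroup_le _ (by norm_num)
        (TT_bound (hB _ g.2))⟩
  have : CompleteSpace B := Metric.isClosed_closedBall.isComplete.completeSpace_coe
  have : Nonempty B := ⟨⟨0, Metric.mem_closedBall_self (by norm_num)⟩⟩
  have hT : ContractingWith (1 / 2) T := by
    refine ⟨by norm_num, LipschitzWith.of_dist_le_mul fun g k => ?_⟩
    have hd0 : 0 ≤ dist g k := dist_nonneg
    change dist (T g).1 (T k).1 ≤ _
    refine (BoundedContinuousFunction.dist_le (by positivity)).2 fun x => ?_
    have h := TT_contr g.1.continuous k.1.continuous (hB _ g.2) (hB _ k.2) (d := dist g k)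
      (fun t => BoundedContinuousFunction.dist_coe_le_dist (f := g.1) (g := k.1) t) x
    refine h.trans ?_
    push_cast
    linarith
  have hfix := hT.fixedPoint_isFixedPt
  set g := ContractingWith.fixedPoint T hT with hgdef
  refine ⟨g.1, g.1.continuous, hB _ g.2, funext fun x => ?_⟩
  exact congrArg (fun k : B => k.1 x) hfix

/-! ### The truncated expansion -/

/-- The truncated asymptotic expansion of `y`. -/
def yp (x : ℝ) : ℝ :=
  √6⁻¹ * (x ^ ((1 : ℝ) / 2) + 1 / (8 * √6) * x ^ (-(2 : ℝ)) - 49 / 768 * x ^ (-(9 : ℝ) / 2)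
    + 1225 / (1536 * √6) * x ^ (-(7 : ℝ)))

/-- The derivative of `yp`. -/
def yp1 (x : ℝ) : ℝ :=
  √6⁻¹ * (1 / 2 * x ^ (-(1 : ℝ) / 2) - 1 / (4 * √6) * x ^ (-(3 : ℝ))
    + 147 / 512 * x ^ (-(11 : ℝ) / 2) - 8575 / (1536 * √6) * x ^ (-(8 : ℝ)))

/-- The second derivative of `yp`. -/
def yp2 (x : ℝ) : ℝ :=
  √6⁻¹ * (-(1 / 4) * x ^ (-(3 : ℝ) / 2) + 3 / (4 * √6) * x ^ (-(4 : ℝ))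
    - 1617 / 1024 * x ^ (-(13 : ℝ) / 2) + 68600 / (1536 * √6) * x ^ (-(9 : ℝ)))

lemma hasDerivAt_yp {x : ℝ} (hx : 0 < x) : HasDerivAt yp (yp1 x) x := by
  refine (((((hasDerivAt_rpow' hx ((1 : ℝ) / 2)).add
    ((hasDerivAt_rpow' hx (-(2 : ℝ))).const_mul _)).sub
    ((hasDerivAt_rpow' hx (-(9 : ℝ) / 2)).const_mul _)).add
    ((hasDerivAt_rpow' hx (-(7 : ℝ))).const_mul _)).const_mul _).congr_deriv ?_
  unfold yp1
  norm_num
  ring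

lemma hasDerivAt_yp1 {x : ℝ} (hx : 0 < x) : HasDerivAt yp1 (yp2 x) x := by
  refine ((((((hasDerivAt_rpow' hx (-(1 : ℝ) / 2)).const_mul _).sub
    ((hasDerivAt_rpow' hx (-(3 : ℝ))).const_mul _)).add
    ((hasDerivAt_rpow' hx (-(11 : ℝ) / 2)).const_mul _)).sub
    ((hasDerivAt_rpow' hx (-(8 : ℝ))).const_mul _)).const_mul _).congr_deriv ?_
  unfold yp2
  norm_num
  ring

/-- The residual of `yp` is `-S`. -/
lemma yp_residual {x : ℝ} (hx : 0 < x) : yp2 x + 6 * yp x ^ 2 - x = -S x := by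
  have hr : 0 < x ^ ((1 : ℝ) / 8) := Real.rpow_pos_of_pos hx _
  have h8 := eighth_pow hx
  unfold yp yp2 S N₀
  rw [sqrt_div_six hx, Real.sqrt_inv, rpow_eighth hx (-76) (p := -(19 : ℝ) / 2) (by norm_num),
    rpow_eighth hx (-20) (p := -(5 : ℝ) / 2) (by norm_num),
    rpow_eighth hx (-40) (p := -(5 : ℝ)) (by norm_num),
    rpow_eighth hx (-72) (p := -(9 : ℝ)) (by norm_num),
    rpow_eighth hx (-12) (p := -(3 : ℝ) / 2) (by norm_num),
    rpow_eighth hx (-32) (p := -(4 : ℝ)) (by norm_num),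
    rpow_eighth hx (-52) (p := -(13 : ℝ) / 2) (by norm_num),
    rpow_eighth hx (-16) (p := -(2 : ℝ)) (by norm_num),
    rpow_eighth hx (-36) (p := -(9 : ℝ) / 2) (by norm_num),
    rpow_eighth hx (-56) (p := -(7 : ℝ)) (by norm_num),
    rpow_eighth hx 4 (p := (1 : ℝ) / 2) (by norm_num)]
  generalize x ^ ((1 : ℝ) / 8) = r at *
  have hr' := hr.ne'
  have h6 := s6_pos.ne'
  have hs := s6_sq
  have hs3 : √(6 : ℝ) ^ 3 = 6 * √6 := by rw [pow_succ, hs]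
  have hs4 : √(6 : ℝ) ^ 4 = 36 := by rw [pow_succ, hs3, mul_assoc, ← sq, hs]; norm_num
  rw [← h8]
  generalize √(6 : ℝ) = s at *
  field_simp
  ring_nf
  simp only [hs, hs3, hs4]
  ring

/-- `EE` is the discrepancy between the linearization at `yp` and the operator inverted by `V`. -/
lemma EE_eq (x : ℝ) :
    12 * yp x = 2 * √6 * x ^ ((1 : ℝ) / 2) - 9 / 64 * x ^ (-(2 : ℝ)) + EE x := by
  have h6 := s6_pos.ne'
  have hs := s6_sq
  have hs3 : √(6 : ℝ) ^ 3 = 6 * √6 := by rw [pow_succ, hs]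
  unfold yp EE
  rw [Real.sqrt_inv]
  generalize √(6 : ℝ) = s at *
  field_simp
  ring_nf
  simp only [hs, hs3]
  ring

lemma y₀D1_eq {x : ℝ} (hx : 0 < x) : y₀D1 x = yp x + V S x := by
  unfold y₀D1
  rw [mul_add, sqrt_mul_w₀r hx, sqrt_div_six hx]
  unfold yp
  have hr : 0 < x ^ ((1 : ℝ) / 8) := Real.rpow_pos_of_pos hx _
  rw [Real.sqrt_inv, rpow_eighth hx (-20) (p := -(5 : ℝ) / 2) (by norm_num),
    rpow_eighth hx (-40) (p := -(5 : ℝ)) (by norm_num),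
    rpow_eighth hx (-60) (p := -(15 : ℝ) / 2) (by norm_num),
    rpow_eighth hx (-16) (p := -(2 : ℝ)) (by norm_num),
    rpow_eighth hx (-36) (p := -(9 : ℝ) / 2) (by norm_num),
    rpow_eighth hx (-56) (p := -(7 : ℝ)) (by norm_num),
    rpow_eighth hx 4 (p := (1 : ℝ) / 2) (by norm_num)]
  generalize x ^ ((1 : ℝ) / 8) = r at *
  have hr' := hr.ne'
  have h6 := s6_pos.ne'
  field_simp

lemma yp_mul_tendsto :
    Filter.Tendsto (fun x => yp x * √(6 / x)) Filter.atTop (nhds 1) := by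
  have h : ∀ p : ℝ, 0 < p → ∀ c : ℝ,
      Filter.Tendsto (fun t : ℝ => c * t ^ (-p)) Filter.atTop (nhds 0) := by
    intro p hp c
    simpa using (tendsto_rpow_neg_atTop hp).const_mul c
  have h1 := (((h (5 / 2) (by norm_num) (1 / (8 * √6))).sub
    (h 5 (by norm_num) (49 / 768))).add (h (15 / 2) (by norm_num) (1225 / (1536 * √6)))).const_add 1
  simp only [sub_zero, add_zero] at h1
  refine h1.congr' ?_
  filter_upwards [Filter.eventually_gt_atTop 0] with x hx
  have hr : 0 < x ^ ((1 : ℝ) / 8) := Real.rpow_pos_of_pos hx _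
  unfold yp
  rw [Real.sqrt_div (by norm_num), Real.sqrt_eq_rpow x, Real.sqrt_inv,
    rpow_eighth hx (-20) (p := -((5 : ℝ) / 2)) (by norm_num),
    rpow_eighth hx (-40) (p := -(5 : ℝ)) (by norm_num),
    rpow_eighth hx (-60) (p := -((15 : ℝ) / 2)) (by norm_num),
    rpow_eighth hx (-16) (p := -(2 : ℝ)) (by norm_num),
    rpow_eighth hx (-36) (p := -(9 : ℝ) / 2) (by norm_num),
    rpow_eighth hx (-56) (p := -(7 : ℝ)) (by norm_num),
    rpow_eighth hx 4 (p := (1 : ℝ) / 2) (by norm_num)]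
  generalize x ^ ((1 : ℝ) / 8) = r at *
  have hr' := hr.ne'
  have h6 := s6_pos.ne'
  field_simp
  ring

/-! ### The solution -/

/-- There is a `C²` solution `y` of `y'' + 6y² - x = 0` on `[L,∞)` with
`|y(x) - y₀(x)| ≤ 0.00682·(15/2)·x^{-43/4}` and `|y'(x) - y₀'(x)| ≤ 0.126·x^{-21/2}` for all
`x ≥ L`; in particular `y(x)√(6/x) → 1` as `x → ∞`. -/
theorem statement14 :
    ∃ y yd ydd : ℝ → ℝ,
      (∀ x ∈ Set.Ici LP1, HasDerivWithinAt y (yd x) (Set.Ici LP1) x) ∧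
      (∀ x ∈ Set.Ici LP1, HasDerivWithinAt yd (ydd x) (Set.Ici LP1) x) ∧
      ContinuousOn ydd (Set.Ici LP1) ∧
      (∀ x ∈ Set.Ici LP1, ydd x + 6 * (y x) ^ 2 - x = 0) ∧
      (∀ x ∈ Set.Ici LP1, |y x - y₀D1 x| ≤ 0.00682 * (15/2) * x ^ (-(43 : ℝ)/4)) ∧
      (∀ x ∈ Set.Ici LP1,
        |yd x - derivWithin y₀D1 (Set.Ici LP1) x| ≤ 0.126 * x ^ (-(21 : ℝ)/2)) ∧
      Filter.Tendsto (fun x => y x * Real.sqrt (6 / x)) Filter.atTop (nhds 1) := by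
  obtain ⟨g, hgc, hg, hfix⟩ := exists_fixed
  set F : ℝ → ℝ := fun t => FF t (hh g t) with hF
  have hA : Adm F := Adm_FF hgc hg
  have hb := FF_bound hg
  have hpos : ∀ x ∈ Set.Ici LP1, 0 < x := fun x hx => LP1_pos.trans_le hx
  -- The fixed-point equation: the ansatz solves the integral equation `h = V S + V F`.
  have hhV : ∀ x, LP1 ≤ x → hh g x = V S x + V F x := by
    intro x hx
    have hx0 : 0 < x := LP1_pos.trans_le hx
    have h1 : x ^ ((43 : ℝ) / 4) * V F x = g x := by
      have := congrFun hfix x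
      rwa [TT, max_eq_right hx] at this
    have e : x ^ (-(43 : ℝ) / 4) * x ^ ((43 : ℝ) / 4) = 1 := by
      rw [← Real.rpow_add hx0]; norm_num
    unfold hh
    linear_combination V F x * e - x ^ (-(43 : ℝ) / 4) * h1
  -- Second derivatives from `hasDerivAt_yp1` and `hasDerivAt_V1` add up to the right-hand side of
  -- `y'' = x - 6 y²`.
  have hode : ∀ x, LP1 ≤ x →
      yp2 x + (S x - (2 * √6 * x ^ ((1 : ℝ) / 2) - 9 / 64 * x ^ (-(2 : ℝ))) * V S x)
        + (F x - (2 * √6 * x ^ ((1 : ℝ) / 2) - 9 / 64 * x ^ (-(2 : ℝ))) * V F x)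
      = x - 6 * (yp x + V S x + V F x) ^ 2 := by
    intro x hx
    have hx0 : 0 < x := LP1_pos.trans_le hx
    have h1 := yp_residual hx0
    have h2 := EE_eq x
    have h3 : F x = -6 * (V S x + V F x) ^ 2 - EE x * (V S x + V F x) := by
      rw [← hhV x hx]
      rfl
    linear_combination h1 + h3 + (V S x + V F x) * h2
  have hy : ∀ x, 0 < x →
      HasDerivAt (fun z => yp z + V S z + V F z) (yp1 x + V1 S x + V1 F x) x := fun x hx =>
    ((hasDerivAt_yp hx).add (hasDerivAt_V Adm_S hx)).add (hasDerivAt_V hA hx)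
  refine ⟨fun x => yp x + V S x + V F x, fun x => yp1 x + V1 S x + V1 F x,
    fun x => x - 6 * (yp x + V S x + V F x) ^ 2, ?_, ?_, ?_, ?_, ?_, ?_, ?_⟩
  · exact fun x hx => (hy x (hpos x hx)).hasDerivWithinAt
  · intro x hx
    have hx0 := hpos x hx
    exact ((((hasDerivAt_yp1 hx0).add (hasDerivAt_V1 Adm_S hx0)).add
      (hasDerivAt_V1 hA hx0)).congr_deriv (hode x hx)).hasDerivWithinAt
  · intro x hx
    exact (continuousAt_id.sub (((hy x (hpos x hx)).continuousAt.pow 2).const_mul 6)).continuousWithinAt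
  · intro x _
    ring
  · intro x hx
    rw [y₀D1_eq (hpos x hx), add_sub_cancel_left]
    refine (V_bound hb hx).trans (mul_le_mul_of_nonneg_right (by norm_num) ?_)
    exact (Real.rpow_pos_of_pos (hpos x hx) _).le
  · intro x hx
    have hx0 := hpos x hx
    have hd : HasDerivAt y₀D1 (yp1 x + V1 S x) x := by
      refine ((hasDerivAt_yp hx0).add (hasDerivAt_V Adm_S hx0)).congr_of_eventuallyEq ?_
      filter_upwards [Ioi_mem_nhds hx0] with z hz
      exact y₀D1_eq hz
    rw [hd.hasDerivWithinAt.derivWithin (uniqueDiffOn_Ici _ x hx), add_sub_cancel_left]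
    refine (V1_bound hb hx).trans (mul_le_mul_of_nonneg_right (by norm_num) ?_)
    exact (Real.rpow_pos_of_pos hx0 _).le
  · have h0 : Filter.Tendsto (fun x => (V S x + V F x) * √(6 / x)) Filter.atTop (nhds 0) := by
      have h1 : Filter.Tendsto (fun x : ℝ => 2.52 * x ^ (-((19 : ℝ) / 2))) Filter.atTop
          (nhds 0) := by
        simpa using (tendsto_rpow_neg_atTop (by norm_num : (0 : ℝ) < 19 / 2)).const_mul 2.52
      refine squeeze_zero_norm' ?_ h1
      filter_upwards [Filter.eventually_ge_atTop 6] with x hx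
      have hxL : LP1 ≤ x := by unfold LP1; linarith
      have h2 := hh_bound hxL (hg x)
      have h3 : √(6 / x) ≤ 1 := by
        refine Real.sqrt_le_one.2 ?_
        exact div_le_one_of_le₀ hx (by linarith)
      rw [← hhV x hxL, Real.norm_eq_abs, abs_mul, abs_of_nonneg (Real.sqrt_nonneg _), ← neg_div]
      exact (mul_le_of_le_one_right (abs_nonneg _) h3).trans h2
    have h := yp_mul_tendsto.add h0
    rw [add_zero] at h
    refine h.congr fun x => ?_
    ring

end
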